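/- Let c₁, c₂, m₁, m₂ ∈ ℝ and define t : ℂ → ℂ by t(x + iy) = (c₁e^{2x} + m₁e^{2y} + m₂e^{−2y}) + i(c₂e^{−2x} − m₁e^{2y} + m₂e^{−2y}). Then t satisfies t_z̄ = t̄ on all of ℂ, i.e., ½(t_x + i·t_y) = conj(t) at every point. -/

import Mathlib

open Complex

/-- The Wirtinger derivative `u_z̄ = ½(u_x + i·u_y)` of `u : ℂ → ℂ`, where
`u_x = fderiv ℝ u z 1` and `u_y = fderiv ℝ u z i`. -/
noncomputable def wzbar (u : ℂ → ℂ) (z : ℂ) : ℂ :=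
  (fderiv ℝ u z 1 + Complex.I * fderiv ℝ u z Complex.I) / 2

/-!
For a separated function `t(x + iy) = V(x) + W(y)` one has `t_z̄ = ½(V' + i·W')`, so `t_z̄ = t̄`
follows from the two ordinary differential equations `V' = 2·V̄` and `W' = -2i·W̄`. Both have the
form `f' = μ·f̄`, which is solved by `f(x) = a·e^{kx}` with `k` real as soon as `μ·ā = k·a`. The
right-hand side being additive in `f`, sums of such exponentials are again solutions. For `μ = 2`
the admissible `a` are real when `k = 2` and imaginary when `k = -2`; for `μ = -2i` they are the
real multiples of `1 - i` when `k = 2` and of `1 + i` when `k = -2`.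
-/

open scoped ComplexConjugate

theorem hasFDerivAt_add_re_im {E : Type*} [NormedAddCommGroup E] [NormedSpace ℝ E]
    {V W : ℝ → E} {V' W' : E} {z : ℂ} (hV : HasDerivAt V V' z.re) (hW : HasDerivAt W W' z.im) :
    HasFDerivAt (fun w : ℂ => V w.re + W w.im)
      (reCLM.smulRight V' + imCLM.smulRight W') z := by
  have hre : HasFDerivAt (fun w : ℂ => V w.re) (reCLM.smulRight V') z :=
    (hV.hasFDerivAt.comp z reCLM.hasFDerivAt).congr_fderiv (by ext; simp)
  have him : HasFDerivAt (fun w : ℂ => W w.im) (imCLM.smulRight W') z :=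
    (hW.hasFDerivAt.comp z imCLM.hasFDerivAt).congr_fderiv (by ext; simp)
  exact hre.add him

theorem wzbar_add_re_im {V W : ℝ → ℂ} {V' W' z : ℂ}
    (hV : HasDerivAt V V' z.re) (hW : HasDerivAt W W' z.im) :
    wzbar (fun w => V w.re + W w.im) z = (V' + I * W') / 2 := by
  simp [wzbar, (hasFDerivAt_add_re_im hV hW).fderiv]

theorem wzbar_add_re_im_eq_conj {V W : ℝ → ℂ} {z : ℂ}
    (hV : HasDerivAt V (2 * conj (V z.re)) z.re)
    (hW : HasDerivAt W (-2 * I * conj (W z.im)) z.im) :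
    wzbar (fun w => V w.re + W w.im) z = conj (V z.re + W z.im) := by
  rw [wzbar_add_re_im hV hW, map_add]
  linear_combination -conj (W z.im) * I_mul_I

theorem hasDerivAt_mul_exp_of_mul_conj_eq {μ a : ℂ} {k : ℝ} (h : μ * conj a = k * a) (x : ℝ) :
    HasDerivAt (fun s : ℝ => a * (Real.exp (k * s) : ℂ))
      (μ * conj (a * (Real.exp (k * x) : ℂ))) x := by
  have hexp : HasDerivAt (fun s : ℝ => Real.exp (k * s)) (Real.exp (k * x) * k) x :=
    (hasDerivAt_const_mul k).exp
  refine (hexp.ofReal_comp.const_mul a).congr_deriv ?_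
  rw [map_mul, conj_ofReal, ofReal_mul]
  linear_combination -(Real.exp (k * x) : ℂ) * h

theorem hasDerivAt_add_of_eq_mul_conj {f g : ℝ → ℂ} {μ : ℂ} {x : ℝ}
    (hf : HasDerivAt f (μ * conj (f x)) x) (hg : HasDerivAt g (μ * conj (g x)) x) :
    HasDerivAt (fun s => f s + g s) (μ * conj (f x + g x)) x :=
  (hf.add hg).congr_deriv (by rw [map_add, mul_add])

/-- For real constants `c₁, c₂, m₁, m₂`, the function
`t(x+iy) = (c₁e^{2x} + m₁e^{2y} + m₂e^{−2y}) + i(c₂e^{−2x} − m₁e^{2y} + m₂e^{−2y})`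
satisfies `t_z̄ = t̄`, i.e. `½(t_x + i·t_y) = conj t`, on all of `ℂ`. -/
theorem exponential_ansatz_solves_tzbar (c₁ c₂ m₁ m₂ : ℝ) :
    ∀ z : ℂ,
      wzbar (fun w : ℂ =>
        (((c₁ * Real.exp (2 * w.re) + m₁ * Real.exp (2 * w.im) +
            m₂ * Real.exp (-2 * w.im) : ℝ) : ℂ) +
          Complex.I * ((c₂ * Real.exp (-2 * w.re) - m₁ * Real.exp (2 * w.im) +
            m₂ * Real.exp (-2 * w.im) : ℝ) : ℂ))) z =
      (starRingEnd ℂ)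
        ((((c₁ * Real.exp (2 * z.re) + m₁ * Real.exp (2 * z.im) +
            m₂ * Real.exp (-2 * z.im) : ℝ) : ℂ) +
          Complex.I * ((c₂ * Real.exp (-2 * z.re) - m₁ * Real.exp (2 * z.im) +
            m₂ * Real.exp (-2 * z.im) : ℝ) : ℂ))) := by
  intro z
  have hc₁ : 2 * conj (c₁ : ℂ) = (2 : ℝ) * (c₁ : ℂ) := by simp
  have hc₂ : 2 * conj (c₂ * I) = (-2 : ℝ) * (c₂ * I) := by simp
  have hm₁ : -2 * I * conj (m₁ * (1 - I)) = (2 : ℝ) * (m₁ * (1 - I)) := by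
    apply Complex.ext <;> simp
  have hm₂ : -2 * I * conj (m₂ * (1 + I)) = (-2 : ℝ) * (m₂ * (1 + I)) := by
    apply Complex.ext <;> simp
  have hV := hasDerivAt_add_of_eq_mul_conj
    (hasDerivAt_mul_exp_of_mul_conj_eq hc₁ z.re) (hasDerivAt_mul_exp_of_mul_conj_eq hc₂ z.re)
  have hW := hasDerivAt_add_of_eq_mul_conj
    (hasDerivAt_mul_exp_of_mul_conj_eq hm₁ z.im) (hasDerivAt_mul_exp_of_mul_conj_eq hm₂ z.im)
  convert wzbar_add_re_im_eq_conj hV hW using 2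
  · funext w
    push_cast
    ring
  · push_cast
    ring
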